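/- Let (x₀, y₀, z₀) ∈ ℝ³ with x₀² + y₀² − z₀² = 1, and define the curve γ₁(t) = ( (x₀+y₀z₀)/(1+z₀²), (y₀−x₀z₀)/(1+z₀²), 0 ) + (t + z₀)·( (−y₀+x₀z₀)/(1+z₀²), (x₀+y₀z₀)/(1+z₀²), 1 ). Then: (i) γ₁(t) lies on the hyperboloid ℋ for all t ∈ ℝ; (ii) γ₁(0) = (x₀, y₀, z₀); and (iii) the composition P ∘ γ₁ is constant, equal to ( (x₀+y₀z₀)/(1+z₀²), (y₀−x₀z₀)/(1+z₀²) ). Hence γ₁ is a vertical curve through (x₀,y₀,z₀). -/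

import Mathlib

/-!
Writing `w = x + iy` and `u = a + ib`, the line `s ↦ (u, 0) + s • (iu, 1)` consists of the points
`(w, s)` with `w = u (1 + is)`, and the projection is `P (w, z) = w (1 - iz) / (1 + z²)`, which is
`w / (1 + iz)`. So for fixed height the two are inverse to each other, and since
`|w|² = |u|² (1 + z²)`, a point lies on the hyperboloid exactly when its projection lies on the
unit circle.
-/

namespace Hyperboloid

variable {K : Type*}

/-- The one-sheeted hyperboloid `x² + y² - z² = 1` over a commutative ring. -/
def hyperboloid (K : Type*) [CommRing K] : Set (K × K × K) :=
  {p | p.1 ^ 2 + p.2.1 ^ 2 - p.2.2 ^ 2 = 1}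

/-- The unit circle `a² + b² = 1`, the base of the bundle projection. -/
def circle (K : Type*) [CommRing K] : Set (K × K) :=
  {u | u.1 ^ 2 + u.2 ^ 2 = 1}

/-- The bundle projection `P`, defined on all of `K³`. It takes the junk value `0` at points with
`1 + z² = 0`, which exist only if `-1` is a square in `K`. -/
def proj [Field K] (p : K × K × K) : K × K :=
  ((p.1 + p.2.1 * p.2.2) / (1 + p.2.2 ^ 2), (p.2.1 - p.1 * p.2.2) / (1 + p.2.2 ^ 2))

/-- The line through `(a, b, 0)` with direction `(-b, a, 1)`, parametrized by height; for `(a, b)`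
on the unit circle it is the fibre of the bundle projection over `(a, b)`. -/
def ruling [CommRing K] (u : K × K) (s : K) : K × K × K :=
  (u.1 - s * u.2, u.2 + s * u.1, s)

theorem ruling_mem_hyperboloid [CommRing K] {u : K × K} (hu : u ∈ circle K) (s : K) :
    ruling u s ∈ hyperboloid K := by
  simp only [circle, hyperboloid, ruling, Set.mem_ofPred_eq] at hu ⊢
  linear_combination (1 + s ^ 2) * hu

section Field

variable [Field K] {p : K × K × K}

theorem proj_mem_circle (hp : p ∈ hyperboloid K) (hz : 1 + p.2.2 ^ 2 ≠ 0) :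
    proj p ∈ circle K := by
  simp only [circle, hyperboloid, proj, Set.mem_ofPred_eq] at hp ⊢
  rw [div_pow, div_pow, ← add_div, div_eq_one_iff_eq (pow_ne_zero 2 hz)]
  linear_combination (1 + p.2.2 ^ 2) * hp

theorem ruling_proj (hz : 1 + p.2.2 ^ 2 ≠ 0) : ruling (proj p) p.2.2 = p := by
  refine Prod.ext ?_ (Prod.ext ?_ rfl) <;> simp only [ruling, proj] <;> field_simp <;> ring

theorem proj_ruling (u : K × K) {s : K} (hs : 1 + s ^ 2 ≠ 0) : proj (ruling u s) = u := by
  refine Prod.ext ?_ ?_ <;> simp only [ruling, proj] <;> rw [div_eq_iff hs] <;> ring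

end Field

end Hyperboloid

open Hyperboloid

theorem stmt13_general {K : Type*} [Field K] {p : K × K × K} (hp : p ∈ hyperboloid K)
    (hz : 1 + p.2.2 ^ 2 ≠ 0) :
    (∀ t, ruling (proj p) (t + p.2.2) ∈ hyperboloid K) ∧
    ruling (proj p) p.2.2 = p ∧
    (∀ t, 1 + (t + p.2.2) ^ 2 ≠ 0 → proj (ruling (proj p) (t + p.2.2)) = proj p) :=
  ⟨fun t => ruling_mem_hyperboloid (proj_mem_circle hp hz) (t + p.2.2),
    ruling_proj hz, fun _ ht => proj_ruling (proj p) ht⟩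

/-- For `(x₀,y₀,z₀)` on the hyperboloid `x² + y² − z² = 1`, the curve
`γ₁(t) = ((x₀+y₀z₀)/(1+z₀²), (y₀−x₀z₀)/(1+z₀²), 0) + (t+z₀)·((−y₀+x₀z₀)/(1+z₀²), (x₀+y₀z₀)/(1+z₀²), 1)`
lies on the hyperboloid, passes through `(x₀,y₀,z₀)` at `t = 0`, and projects under
`P(x,y,z) = ((x+yz)/(1+z²), (y−xz)/(1+z²))` to the constant
`((x₀+y₀z₀)/(1+z₀²), (y₀−x₀z₀)/(1+z₀²))`; hence `γ₁` is a vertical curve. -/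
theorem stmt13 (x₀ y₀ z₀ : ℝ) (h : x₀ ^ 2 + y₀ ^ 2 - z₀ ^ 2 = 1) :
    let P : ℝ × ℝ × ℝ → ℝ × ℝ := fun p =>
      ((p.1 + p.2.1 * p.2.2) / (1 + p.2.2 ^ 2), (p.2.1 - p.1 * p.2.2) / (1 + p.2.2 ^ 2))
    let γ₁ : ℝ → ℝ × ℝ × ℝ := fun t =>
      ((x₀ + y₀ * z₀) / (1 + z₀ ^ 2) + (t + z₀) * ((-y₀ + x₀ * z₀) / (1 + z₀ ^ 2)),
        (y₀ - x₀ * z₀) / (1 + z₀ ^ 2) + (t + z₀) * ((x₀ + y₀ * z₀) / (1 + z₀ ^ 2)),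
        0 + (t + z₀) * 1)
    (∀ t : ℝ, (γ₁ t).1 ^ 2 + (γ₁ t).2.1 ^ 2 - (γ₁ t).2.2 ^ 2 = 1) ∧
    γ₁ 0 = (x₀, y₀, z₀) ∧
    (∀ t : ℝ, P (γ₁ t) = ((x₀ + y₀ * z₀) / (1 + z₀ ^ 2), (y₀ - x₀ * z₀) / (1 + z₀ ^ 2))) := by
  have one_add_sq_ne_zero (s : ℝ) : 1 + s ^ 2 ≠ 0 := by positivity
  have neg_add_eq : -y₀ + x₀ * z₀ = -(y₀ - x₀ * z₀) := by ring
  simpa only [hyperboloid, Set.mem_ofPred_eq, ruling, proj, neg_add_eq, neg_div, mul_neg,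
    ← sub_eq_add_neg, zero_add, mul_one, one_add_sq_ne_zero, ne_eq, not_false_eq_true, forall_const]
    using stmt13_general (p := (x₀, y₀, z₀)) h (one_add_sq_ne_zero z₀)
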